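/- arXiv:1703.10646 — 8 statements merged into one kernel-verified Lean document; each statement's English description precedes it below -/
import Mathlib

section
/- For each k ∈ {1,2,3,4} the intersection of the complex line V_k with the lattice Λ' equals the subgroup Λ_k; that is, V₁ ∩ Λ' = Λ₁, V₂ ∩ Λ' = Λ₂, V₃ ∩ Λ' = Λ₃ and V₄ ∩ Λ' = Λ₄ as subsets of ℂ². -/
noncomputable section

/-- ζ = (1 + √3·i)/2, a primitive sixth root of unity. -/
def ζ : ℂ := (1 + (Real.sqrt 3 : ℂ) * Complex.I) / 2

def e1 : ℂ × ℂ := (1, 0)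
def e2 : ℂ × ℂ := (0, 1)
def l1 : ℂ × ℂ := (ζ, 0)
def l2 : ℂ × ℂ := (0, ζ)

/-- The period lattice Λ' = ℤλ₁ ⊕ ℤλ₂ ⊕ ℤe₁ ⊕ ℤe₂ ⊂ ℂ². -/
def Λ' : Set (ℂ × ℂ) :=
  {v | ∃ a b c d : ℤ, v = (a : ℂ) • l1 + (b : ℂ) • l2 + (c : ℂ) • e1 + (d : ℂ) • e2}

/-- The complex line ℂ·w in ℂ². -/
def line (w : ℂ × ℂ) : Set (ℂ × ℂ) := {v | ∃ t : ℂ, v = t • w}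

/-- The rank-two subgroup ℤw₁ + ℤw₂ of ℂ². -/
def lat (w₁ w₂ : ℂ × ℂ) : Set (ℂ × ℂ) :=
  {v | ∃ a b : ℤ, v = (a : ℂ) • w₁ + (b : ℂ) • w₂}

theorem zeta_sq : ζ * ζ = ζ - 1 := by
  have h3 : (Real.sqrt 3 : ℂ) * (Real.sqrt 3 : ℂ) = 3 := by
    rw [← Complex.ofReal_mul, Real.mul_self_sqrt (by norm_num)]
    norm_num
  unfold ζ
  linear_combination (1 / 4 : ℂ) * (Complex.I * Complex.I) * h3 + (3 / 4 : ℂ) * Complex.I_mul_I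

/-- For each k the intersection of the line V_k with the lattice Λ' equals Λ_k. -/
theorem stmt0 :
    line e1 ∩ Λ' = lat l1 e1 ∧
    line e2 ∩ Λ' = lat l2 e2 ∧
    line (e1 + e2) ∩ Λ' = lat (l1 + l2) (e1 + e2) ∧
    line (e1 + ζ • e2) ∩ Λ' = lat (l1 + l2 - e2) (l2 + e1) := by
  have hz := zeta_sq
  refine ⟨?_, ?_, ?_, ?_⟩
  all_goals
    ext ⟨x, y⟩
    simp only [line, Λ', lat, e1, e2, l1, l2, Set.mem_inter_iff, Set.mem_setOf_eq,
      Prod.smul_mk, Prod.mk_add_mk, Prod.mk_sub_mk, Prod.mk.injEq, smul_eq_mul,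
      mul_zero, mul_one, add_zero, zero_add, sub_zero]
  · constructor
    · rintro ⟨⟨t, h1, h2⟩, a, b, c, d, h3, h4⟩
      exact ⟨a, c, h3, h2⟩
    · rintro ⟨a, c, h1, h2⟩
      exact ⟨⟨x, rfl, h2⟩, a, 0, c, 0, h1, by simp [h2]⟩
  · constructor
    · rintro ⟨⟨t, h1, h2⟩, a, b, c, d, h3, h4⟩
      exact ⟨b, d, h1, h4⟩
    · rintro ⟨b, d, h1, h2⟩
      exact ⟨⟨y, h1, rfl⟩, 0, b, 0, d, by simp [h1], h2⟩
  · constructor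
    · rintro ⟨⟨t, h1, h2⟩, a, b, c, d, h3, h4⟩
      exact ⟨a, c, h3, by rw [h2, ← h1, h3]⟩
    · rintro ⟨a, c, h1, h2⟩
      exact ⟨⟨x, rfl, by rw [h1, h2]⟩, a, a, c, c, h1, h2⟩
  · constructor
    · rintro ⟨⟨t, h1, h2⟩, a, b, c, d, h3, h4⟩
      refine ⟨a, c, h3, ?_⟩
      rw [h2, ← h1, h3]
      linear_combination (a : ℂ) * hz
    · rintro ⟨a, c, h1, h2⟩
      refine ⟨⟨x, rfl, ?_⟩, a, a + c, c, -a, h1, ?_⟩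
      · rw [h1, h2]
        linear_combination -(a : ℂ) * hz
      · rw [h2]
        push_cast
        ring
end
end

section
/- For all i ≠ j in {1,2,3,4}: (a) V_i ∩ V_j = {0} (so V_i + V_j = ℂ²), and (b) whenever v ∈ V_i, w ∈ V_j and v − w ∈ Λ', one has v ∈ Λ' (equivalently v ∈ Λ_i and w ∈ Λ_j). In other words, the four elliptic curves E'_k = V_k/Λ_k inside A' = ℂ²/Λ' intersect pairwise transversally at the origin and at no other point. -/
noncomputable section

/-- The four complex lines V₁, V₂, V₃, V₄. -/
def Vline : Fin 4 → Set (ℂ × ℂ) :=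
  ![line e1, line e2, line (e1 + e2), line (e1 + ζ • e2)]

/-- The four sublattices Λ₁, Λ₂, Λ₃, Λ₄. -/
def Lam : Fin 4 → Set (ℂ × ℂ) :=
  ![lat l1 e1, lat l2 e2, lat (l1 + l2) (e1 + e2), lat (l1 + l2 - e2) (l2 + e1)]

/-- The ring ℤ[ζ]. -/
def eis : Subring ℂ where
  carrier := {x | ∃ a b : ℤ, x = a * ζ + b}
  zero_mem' := ⟨0, 0, by simp⟩
  one_mem' := ⟨0, 1, by simp⟩
  add_mem' := by
    rintro _ _ ⟨a, b, rfl⟩ ⟨c, d, rfl⟩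
    exact ⟨a + c, b + d, by push_cast; ring⟩
  neg_mem' := by
    rintro _ ⟨a, b, rfl⟩
    exact ⟨-a, -b, by push_cast; ring⟩
  mul_mem' := by
    rintro _ _ ⟨a, b, rfl⟩ ⟨c, d, rfl⟩
    exact ⟨a * c + a * d + b * c, b * d - a * c, by
      push_cast; linear_combination (a * c : ℂ) * zeta_sq⟩

theorem mem_eis {x : ℂ} : x ∈ eis ↔ ∃ a b : ℤ, x = a * ζ + b := Iff.rfl

theorem zeta_mem : ζ ∈ eis := ⟨1, 0, by simp⟩

theorem mem_period (v : ℂ × ℂ) : v ∈ Λ' ↔ v.1 ∈ eis ∧ v.2 ∈ eis := by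
  constructor
  · rintro ⟨a, b, c, d, rfl⟩
    exact ⟨⟨a, c, by simp [l1, l2, e1, e2]⟩, ⟨b, d, by simp [l1, l2, e1, e2]⟩⟩
  · rintro ⟨⟨a, c, h⟩, ⟨b, d, h'⟩⟩
    exact ⟨a, b, c, d, by ext1 <;> simp [l1, l2, e1, e2, h, h']⟩

/-- Direction vectors of the four lines. -/
def dir : Fin 4 → ℂ × ℂ := ![(1, 0), (0, 1), (1, 1), (1, ζ)]

theorem mem_Vline (i : Fin 4) (v : ℂ × ℂ) : v ∈ Vline i ↔ ∃ t : ℂ, v = t • dir i := by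
  fin_cases i <;> simp [Vline, line, dir, e1, e2]

theorem dir_mem (i : Fin 4) : (dir i).1 ∈ eis ∧ (dir i).2 ∈ eis := by
  fin_cases i <;> simp [dir, zeta_mem, eis.zero_mem, eis.one_mem]

theorem smul_mem_Lam (i : Fin 4) (t : ℂ) (ht : t ∈ eis) : t • dir i ∈ Lam i := by
  obtain ⟨a, b, rfl⟩ := ht
  have h := zeta_sq
  fin_cases i <;> refine ⟨a, b, ?_⟩ <;> ext1 <;> simp [dir, l1, l2, e1, e2]
  linear_combination (a : ℂ) * h

theorem det_unit (i j : Fin 4) (hij : i ≠ j) :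
    ∃ u ∈ eis, u * ((dir i).1 * (dir j).2 - (dir i).2 * (dir j).1) = 1 := by
  have h := zeta_sq
  have h1 := eis.one_mem
  have hz := zeta_mem
  have key : ∀ u : ℂ, u ∈ eis →
      u * ((dir i).1 * (dir j).2 - (dir i).2 * (dir j).1) = 1 →
      ∃ u ∈ eis, u * ((dir i).1 * (dir j).2 - (dir i).2 * (dir j).1) = 1 :=
    fun u a b => ⟨u, a, b⟩
  fin_cases i <;> fin_cases j <;> first
    | exact absurd rfl hij
    | (refine key 1 h1 ?_; simp [dir]; done)
    | (refine key (-1) (eis.neg_mem h1) ?_; simp [dir]; done)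
    | (refine key (1 - ζ) (eis.sub_mem h1 hz) ?_; simp [dir]; linear_combination -h; done)
    | (refine key (ζ - 1) (eis.sub_mem hz h1) ?_; simp [dir]; linear_combination -h; done)
    | (refine key (-ζ) (eis.neg_mem hz) ?_; simp [dir]; linear_combination -h; done)
    | (refine key ζ hz ?_; simp [dir]; linear_combination -h; done)

theorem coeff_mem (i j : Fin 4) (hij : i ≠ j) (t s : ℂ)
    (h : t • dir i - s • dir j ∈ Λ') : t ∈ eis := by
  obtain ⟨u, hu, hd⟩ := det_unit i j hij
  rw [mem_period] at h
  have e : t = u * ((t • dir i - s • dir j).1 * (dir j).2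
      - (t • dir i - s • dir j).2 * (dir j).1) := by
    simp only [Prod.fst_sub, Prod.snd_sub, Prod.smul_fst, Prod.smul_snd, smul_eq_mul]
    linear_combination -t * hd
  rw [e]
  exact eis.mul_mem hu (eis.sub_mem (eis.mul_mem h.1 (dir_mem j).2)
    (eis.mul_mem h.2 (dir_mem j).1))

/-- For i ≠ j: V_i ∩ V_j = {0}, and if v ∈ V_i, w ∈ V_j with v − w ∈ Λ' then v ∈ Λ'
(equivalently v ∈ Λ_i and w ∈ Λ_j): the elliptic curves E'_k intersect pairwise
transversally at the origin and nowhere else. -/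
theorem stmt1 (i j : Fin 4) (hij : i ≠ j) :
    (Vline i ∩ Vline j = {0}) ∧
    (∀ v ∈ Vline i, ∀ w ∈ Vline j, v - w ∈ Λ' →
      v ∈ Λ' ∧ v ∈ Lam i ∧ w ∈ Lam j) := by
  constructor
  · ext v
    simp only [Set.mem_inter_iff, mem_Vline, Set.mem_singleton_iff]
    constructor
    · rintro ⟨⟨t, rfl⟩, s, hs⟩
      obtain ⟨u, -, hd⟩ := det_unit i j hij
      have h1 := congrArg Prod.fst hs
      have h2 := congrArg Prod.snd hs
      simp only [Prod.smul_fst, Prod.smul_snd, smul_eq_mul] at h1 h2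
      have ht : t = 0 := by
        linear_combination -t * hd + u * (dir j).2 * h1 - u * (dir j).1 * h2
      simp [ht]
    · rintro rfl
      exact ⟨⟨0, by simp⟩, 0, by simp⟩
  · intro v hv w hw h
    obtain ⟨t, rfl⟩ := (mem_Vline i v).1 hv
    obtain ⟨s, rfl⟩ := (mem_Vline j w).1 hw
    have ht := coeff_mem i j hij t s h
    have hs : s ∈ eis := by
      refine coeff_mem j i hij.symm s t ?_
      rw [mem_period] at h ⊢
      rw [← neg_sub]
      exact ⟨eis.neg_mem h.1, eis.neg_mem h.2⟩
    refine ⟨?_, smul_mem_Lam i t ht, smul_mem_Lam j s hs⟩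
    rw [mem_period]
    exact ⟨eis.mul_mem ht (dir_mem i).1, eis.mul_mem ht (dir_mem i).2⟩
end
end

section
/- The imaginary part of the hermitian form h takes the following values on the pairs of lattice generators: Im h(λ₁,λ₂) = −1, Im h(λ₁,e₁) = 3, Im h(λ₁,e₂) = −2, Im h(λ₂,e₁) = −1, Im h(λ₂,e₂) = 3, Im h(e₁,e₂) = −1. In particular, Im h takes integer values on all pairs of elements of the lattice Λ'. -/
noncomputable section

/-- The hermitian form h representing the class of D_{A'} in NS(A'). -/
def h (v w : ℂ × ℂ) : ℂ :=
  (2 / (Real.sqrt 3 : ℂ)) *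
    (3 * v.1 * (starRingEnd ℂ) w.1 - (1 + ζ) * v.1 * (starRingEnd ℂ) w.2
      - (1 + (starRingEnd ℂ) ζ) * v.2 * (starRingEnd ℂ) w.1
      + 3 * v.2 * (starRingEnd ℂ) w.2)

theorem key_im (a b c d a₂ b₂ c₂ d₂ : ℝ) :
    (h ((a : ℂ) * ζ + c, (b : ℂ) * ζ + d) ((a₂ : ℂ) * ζ + c₂, (b₂ : ℂ) * ζ + d₂)).im =
      -(a * b₂ - b * a₂) + 3 * (a * c₂ - c * a₂) - 2 * (a * d₂ - d * a₂)
        - (b * c₂ - c * b₂) + 3 * (b * d₂ - d * b₂) - (c * d₂ - d * c₂) := by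
  have hz : ζ = ⟨1 / 2, Real.sqrt 3 / 2⟩ := by
    apply Complex.ext <;> simp [ζ]
  have hc : (2 / (Real.sqrt 3 : ℂ)) = ((2 / Real.sqrt 3 : ℝ) : ℂ) := by push_cast; rfl
  have hs : Real.sqrt 3 ^ 2 = 3 := Real.sq_sqrt (by norm_num)
  have hp : Real.sqrt 3 ≠ 0 := by positivity
  unfold h
  rw [hc, Complex.im_ofReal_mul, hz]
  generalize Real.sqrt 3 = s at hs hp
  simp
  field_simp
  ring_nf
  simp only [hs]
  ring

/-- The values of Im h on pairs of lattice generators; in particular Im h is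
integer-valued on Λ' × Λ'. -/
theorem stmt3 :
    (h l1 l2).im = -1 ∧ (h l1 e1).im = 3 ∧ (h l1 e2).im = -2 ∧
    (h l2 e1).im = -1 ∧ (h l2 e2).im = 3 ∧ (h e1 e2).im = -1 ∧
    (∀ v ∈ Λ', ∀ w ∈ Λ', ∃ n : ℤ, (h v w).im = (n : ℝ)) := by
  refine ⟨?_, ?_, ?_, ?_, ?_, ?_, ?_⟩
  · have := key_im 1 0 0 0 0 1 0 0
    norm_num at this
    simpa [l1, l2] using this
  · have := key_im 1 0 0 0 0 0 1 0
    norm_num at this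
    simpa [l1, e1] using this
  · have := key_im 1 0 0 0 0 0 0 1
    norm_num at this
    simpa [l1, e2] using this
  · have := key_im 0 1 0 0 0 0 1 0
    norm_num at this
    simpa [l2, e1] using this
  · have := key_im 0 1 0 0 0 0 0 1
    norm_num at this
    simpa [l2, e2] using this
  · have := key_im 0 0 1 0 0 0 0 1
    norm_num at this
    simpa [e1, e2] using this
  · rintro v ⟨a, b, c, d, rfl⟩ w ⟨a₂, b₂, c₂, d₂, rfl⟩
    refine ⟨-(a * b₂ - b * a₂) + 3 * (a * c₂ - c * a₂) - 2 * (a * d₂ - d * a₂)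
        - (b * c₂ - c * b₂) + 3 * (b * d₂ - d * b₂) - (c * d₂ - d * c₂), ?_⟩
    have := key_im a b c d a₂ b₂ c₂ d₂
    push_cast at this ⊢
    rw [← this]
    simp [l1, l2, e1, e2]
end
end

section
/- Let ε ∈ {±1}⁴ be different from (1,1,1,1) and let L_ε = {a ∈ ℤ⁴ : χ_ε(a) = 1} be the kernel of χ_ε. Then E(a,b) is even for all a, b ∈ L_ε if and only if ε is one of (−1,−1,1,−1), (1,−1,−1,1), (−1,1,−1,−1), i.e. if and only if χ_ε ∈ {χ₁, χ₂, χ₃}. -/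
noncomputable section

/-- The character χ_ε : ℤ⁴ → {±1}, χ_ε(a) = ε₁^{a₁}ε₂^{a₂}ε₃^{a₃}ε₄^{a₄}. -/
def chiE (ε : Fin 4 → ℤˣ) (a : Fin 4 → ℤ) : ℤˣ := ∏ i, ε i ^ a i

/-- The alternating ℤ-bilinear form E on ℤ⁴ (imaginary part of the hermitian form of
the branch divisor D_{A'} in the basis (λ₁,λ₂,e₁,e₂)). -/
def Eform (a b : Fin 4 → ℤ) : ℤ :=
  -(a 0 * b 1 - a 1 * b 0) + 3 * (a 0 * b 2 - a 2 * b 0) - 2 * (a 0 * b 3 - a 3 * b 0)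
    - (a 1 * b 2 - a 2 * b 1) + 3 * (a 1 * b 3 - a 3 * b 1) - (a 2 * b 3 - a 3 * b 2)

/-- For non-trivial ε, E is even on ker χ_ε × ker χ_ε iff
ε ∈ {(−1,−1,1,−1), (1,−1,−1,1), (−1,1,−1,−1)}, i.e. χ_ε ∈ {χ₁, χ₂, χ₃}. -/
theorem stmt5 (ε : Fin 4 → ℤˣ) (hε : ε ≠ ![1, 1, 1, 1]) :
    (∀ a ∈ {a : Fin 4 → ℤ | chiE ε a = 1}, ∀ b ∈ {b : Fin 4 → ℤ | chiE ε b = 1},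
      Even (Eform a b)) ↔
    (ε = ![-1, -1, 1, -1] ∨ ε = ![1, -1, -1, 1] ∨ ε = ![-1, 1, -1, -1]) := by
  have hz : ∀ n : ℤ, (-1 : ℤˣ) ^ n = 1 ↔ Even n := by
    intro n
    rcases Int.even_or_odd n with h | h
    · simp [h, h.neg_one_zpow]
    · simp [h.neg_one_zpow, h]
  constructor
  · intro h
    have key : ∃ x y z w : ℤˣ, ε = ![x, y, z, w] :=
      ⟨ε 0, ε 1, ε 2, ε 3, by ext i; fin_cases i <;> rfl⟩
    obtain ⟨x, y, z, w, rfl⟩ := key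
    have pick : ∀ a ∈ [![1, 0, 0, 0], ![0, 1, 1, 0], ![0, 0, 0, 1], ![1, 1, 1, 1]],
        ∀ b ∈ [![1, 1, 0, 0], ![0, 0, 1, 0], ![0, 1, 0, 1], ![1, 0, 1, 1]],
        chiE ![x, y, z, w] a = 1 → chiE ![x, y, z, w] b = 1 → False := by
      intro a ha b hb h1 h2
      have h3 := h a h1 b h2
      revert h3
      simp only [List.mem_cons, List.not_mem_nil, or_false] at ha hb
      rcases ha with rfl | rfl | rfl | rfl <;> rcases hb with rfl | rfl | rfl | rfl <;>
        simp [Eform] <;> decide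
    clear h
    rcases Int.units_eq_one_or x with rfl | rfl <;> rcases Int.units_eq_one_or y with rfl | rfl <;>
      rcases Int.units_eq_one_or z with rfl | rfl <;>
      rcases Int.units_eq_one_or w with rfl | rfl <;>
      simp [chiE, Fin.prod_univ_four] at pick hε ⊢
  · have hE : ∀ a b : Fin 4 → ℤ, Even (Eform a b) ↔
        Even ((a 0 + a 1 + a 3) * (b 1 + b 2) - (b 0 + b 1 + b 3) * (a 1 + a 2)) := by
      intro a b
      have e : Eform a b = ((a 0 + a 1 + a 3) * (b 1 + b 2) - (b 0 + b 1 + b 3) * (a 1 + a 2)) + 2 *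
        (-(a 0 * b 1 - a 1 * b 0) + (a 0 * b 2 - a 2 * b 0) - (a 0 * b 3 - a 3 * b 0)
        - (a 1 * b 2 - a 2 * b 1) + 2 * (a 1 * b 3 - a 3 * b 1)) := by
        unfold Eform; ring
      rw [e, Int.even_add]
      simp
    have hE' : ∀ a b : Fin 4 → ℤ, Even (Eform a b) ↔
        Even ((a 0 + a 2 + a 3) * (b 1 + b 2) - (b 0 + b 2 + b 3) * (a 1 + a 2)) := by
      intro a b
      have e : Eform a b = ((a 0 + a 2 + a 3) * (b 1 + b 2) - (b 0 + b 2 + b 3) * (a 1 + a 2)) + 2 *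
        (-(a 0 * b 1 - a 1 * b 0) + (a 0 * b 2 - a 2 * b 0) - (a 0 * b 3 - a 3 * b 0)
        + 2 * (a 1 * b 3 - a 3 * b 1)) := by
        unfold Eform; ring
      rw [e, Int.even_add]
      simp
    rintro (rfl | rfl | rfl) a ha b hb <;>
      simp [chiE, Fin.prod_univ_four, ← zpow_add, hz] at ha hb
    · rw [hE]; exact (ha.mul_right _).sub (hb.mul_right _)
    · rw [hE]; exact (hb.mul_left _).sub (ha.mul_left _)
    · rw [hE']; exact (ha.mul_right _).sub (hb.mul_right _)
end
end

section
/- The matrix M = [[−ζ, 1], [0, 1]] ∈ GL(2,ℂ) satisfies M³ = I, maps the lattice Λ' bijectively onto itself (explicitly M(λ₁) = e₁ − λ₁, M(λ₂) = λ₁ + λ₂, M(e₁) = −λ₁, M(e₂) = e₁ + e₂), and its induced pullback action on characters of Λ' cyclically permutes χ₁, χ₂, χ₃: namely χ₁ ∘ M = χ₃, χ₃ ∘ M = χ₂, χ₂ ∘ M = χ₁. -/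
noncomputable section

/-- The lattice element a₁λ₁ + a₂λ₂ + a₃e₁ + a₄e₂ with integer coefficients a. -/
def toV (a : Fin 4 → ℤ) : ℂ × ℂ :=
  (a 0 : ℂ) • l1 + (a 1 : ℂ) • l2 + (a 2 : ℂ) • e1 + (a 3 : ℂ) • e2

/-- The linear map of ℂ² given by the matrix M = [[−ζ, 1], [0, 1]]. -/
def Mmap (v : ℂ × ℂ) : ℂ × ℂ := (-ζ * v.1 + v.2, v.2)

/-- The rational representation of M on the coordinates w.r.t. (λ₁,λ₂,e₁,e₂). -/
def MΛ (a : Fin 4 → ℤ) : Fin 4 → ℤ := ![-a 0 + a 1 - a 2, a 1, a 0 + a 3, a 3]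

theorem Mmap_cube (v : ℂ × ℂ) : Mmap (Mmap (Mmap v)) = v := by
  obtain ⟨x, y⟩ := v
  ext
  · simp only [Mmap]
    linear_combination (-(ζ + 1) * x + y) * zeta_sq
  · simp only [Mmap]

theorem Mmap_toV (a : Fin 4 → ℤ) : Mmap (toV a) = toV (MΛ a) := by
  ext
  · simp [Mmap, toV, MΛ, l1, l2, e1, e2]
    linear_combination (-(a 0 : ℂ)) * zeta_sq
  · simp [Mmap, toV, MΛ, l1, l2, e1, e2]

theorem mem_lattice_iff (v : ℂ × ℂ) : v ∈ Λ' ↔ ∃ a, v = toV a := by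
  constructor
  · rintro ⟨a, b, c, d, h⟩
    exact ⟨![a, b, c, d], by simpa [toV] using h⟩
  · rintro ⟨a, h⟩
    exact ⟨a 0, a 1, a 2, a 3, h⟩

theorem Mmap_mapsTo : Set.MapsTo Mmap Λ' Λ' := by
  intro v hv
  obtain ⟨a, rfl⟩ := (mem_lattice_iff v).1 hv
  exact (mem_lattice_iff _).2 ⟨_, Mmap_toV a⟩

theorem neg_one_zpow_congr (m n k : ℤ) (h : m = n + 2 * k) : (-1 : ℤˣ) ^ m = (-1) ^ n := by
  rw [h, zpow_add, zpow_mul]; simp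

/-- M³ = I, M maps Λ' bijectively onto itself (with the explicit images of the
generators as stated), its rational representation is MΛ, and the pullback action
of M cyclically permutes the characters: χ₁∘M = χ₃, χ₃∘M = χ₂, χ₂∘M = χ₁. -/
theorem stmt9 :
    (∀ v : ℂ × ℂ, Mmap (Mmap (Mmap v)) = v) ∧
    Set.BijOn Mmap Λ' Λ' ∧
    (Mmap l1 = e1 - l1 ∧ Mmap l2 = l1 + l2 ∧ Mmap e1 = -l1 ∧ Mmap e2 = e1 + e2) ∧
    (∀ a : Fin 4 → ℤ, Mmap (toV a) = toV (MΛ a)) ∧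
    (∀ a : Fin 4 → ℤ,
      chiE ![-1, -1, 1, -1] (MΛ a) = chiE ![-1, 1, -1, -1] a ∧
      chiE ![-1, 1, -1, -1] (MΛ a) = chiE ![1, -1, -1, 1] a ∧
      chiE ![1, -1, -1, 1] (MΛ a) = chiE ![-1, -1, 1, -1] a) := by
  refine ⟨Mmap_cube, ⟨Mmap_mapsTo, ?_, ?_⟩, ⟨?_, ?_, ?_, ?_⟩, Mmap_toV, ?_⟩
  · intro v _ w _ h
    rw [← Mmap_cube v, h, Mmap_cube]
  · intro v hv
    exact ⟨Mmap (Mmap v), Mmap_mapsTo (Mmap_mapsTo hv), Mmap_cube v⟩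
  · ext
    · simp [Mmap, l1, e1]
      linear_combination -zeta_sq
    · simp [Mmap, l1, e1]
  · ext <;> simp [Mmap, l1, l2]
  · ext <;> simp [Mmap, l1, e1]
  · ext <;> simp [Mmap, e1, e2]
  · intro a
    refine ⟨?_, ?_, ?_⟩
    · simp only [chiE, MΛ, Fin.prod_univ_four, Matrix.cons_val, one_zpow, mul_one, one_mul,
        ← zpow_add]
      exact neg_one_zpow_congr _ _ (-a 0 + a 1 - a 2) (by ring)
    · simp only [chiE, MΛ, Fin.prod_univ_four, Matrix.cons_val, one_zpow, mul_one, one_mul,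
        ← zpow_add]
      exact neg_one_zpow_congr _ _ (a 3 - a 2) (by ring)
    · simp only [chiE, MΛ, Fin.prod_univ_four, Matrix.cons_val, one_zpow, mul_one, one_mul,
        ← zpow_add]
      exact neg_one_zpow_congr _ _ 0 (by ring)
end
end

section
/- In the group of permutations of {1,…,16}, the subgroup generated by p₂ and p₃ is isomorphic to SL(2, ℤ/3ℤ). -/
/-- The permutation p₂ = (1 13 7 12)(2 9 14 16)(3 5 15 6)(4 11 8 10) of {1,…,16},
written 0-indexed on `Fin 16`. -/
def p2 : Equiv.Perm (Fin 16) :=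
  ⟨![12, 8, 4, 10, 14, 2, 11, 9, 13, 3, 7, 0, 6, 15, 5, 1],
   ![11, 15, 5, 9, 2, 14, 12, 10, 1, 7, 3, 6, 0, 8, 4, 13],
   by decide, by decide⟩

/-- The permutation p₃ = (1 13 5 7 12 6)(2 4 11 14 8 10)(3 15)(9 16) of {1,…,16},
written 0-indexed on `Fin 16`. -/
def p3 : Equiv.Perm (Fin 16) :=
  ⟨![12, 3, 14, 10, 6, 0, 11, 9, 15, 1, 13, 5, 4, 7, 2, 8],
   ![5, 9, 14, 1, 12, 11, 4, 13, 15, 7, 3, 6, 0, 10, 2, 8],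
   by decide, by decide⟩

/-- block (orbit) of a point -/
def blk : Fin 16 → Fin 2 := ![0, 1, 0, 1, 0, 0, 0, 1, 1, 1, 1, 0, 0, 1, 0, 1]
/-- first coordinate of the nonzero vector attached to a point -/
def xs : Fin 16 → ZMod 3 := ![1, 1, 1, 1, 2, 1, 2, 2, 1, 0, 0, 0, 0, 2, 2, 2]
/-- second coordinate -/
def ys : Fin 16 → ZMod 3 := ![0, 1, 2, 0, 2, 1, 0, 0, 2, 1, 2, 1, 2, 2, 1, 1]
/-- the point with given block and vector -/
def idx (b : Fin 2) (x y : ZMod 3) : Fin 16 :=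
  (![![![0, 11, 12], ![0, 5, 2], ![6, 14, 4]], ![![0, 9, 10], ![3, 1, 8], ![7, 15, 13]]] : Fin 2 → Fin 3 → Fin 3 → Fin 16) b x y

lemma idx_spec : ∀ (b : Fin 2) (x y : ZMod 3), ¬ (x = 0 ∧ y = 0) →
    blk (idx b x y) = b ∧ xs (idx b x y) = x ∧ ys (idx b x y) = y := by decide

lemma idx_self : ∀ k, idx (blk k) (xs k) (ys k) = k := by decide

lemma vec_ne : ∀ k, ¬ (xs k = 0 ∧ ys k = 0) := by decide

abbrev SL23 := Matrix.SpecialLinearGroup (Fin 2) (ZMod 3)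

def act (A : SL23) (k : Fin 16) : Fin 16 :=
  idx (blk k) (A.1 0 0 * xs k + A.1 0 1 * ys k) (A.1 1 0 * xs k + A.1 1 1 * ys k)

lemma act_spec (A : SL23) (k : Fin 16) :
    blk (act A k) = blk k ∧ xs (act A k) = A.1 0 0 * xs k + A.1 0 1 * ys k ∧
      ys (act A k) = A.1 1 0 * xs k + A.1 1 1 * ys k := by
  apply idx_spec
  rintro ⟨h1, h2⟩
  have hd := A.2
  rw [Matrix.det_fin_two] at hd
  apply vec_ne k
  constructor
  · linear_combination A.1 1 1 * h1 - A.1 0 1 * h2 - xs k * hd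
  · linear_combination A.1 0 0 * h2 - A.1 1 0 * h1 - ys k * hd

def endHom : SL23 →* Function.End (Fin 16) where
  toFun := act
  map_one' := by
    funext k
    change act 1 k = k
    simp [act, idx_self]
  map_mul' A B := by
    funext k
    obtain ⟨h1, h2, h3⟩ := act_spec B k
    change act (A * B) k = act A (act B k)
    rw [act, act, h1, h2, h3]
    congr 1 <;> simp [Matrix.mul_apply, Fin.sum_univ_two] <;> ring

def phi : SL23 →* Equiv.Perm (Fin 16) := endHom.toHomPerm

lemma phi_apply (A : SL23) (k : Fin 16) : phi A k = act A k := rfl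

lemma phi_inj : Function.Injective phi := by
  intro A B h
  have h0 : act A 0 = act B 0 := by rw [← phi_apply, h, phi_apply]
  have h1 : act A 9 = act B 9 := by rw [← phi_apply, h, phi_apply]
  obtain ⟨-, a1, a2⟩ := act_spec A 0
  obtain ⟨-, b1, b2⟩ := act_spec B 0
  obtain ⟨-, c1, c2⟩ := act_spec A 9
  obtain ⟨-, d1, d2⟩ := act_spec B 9
  rw [h0] at a1 a2
  rw [h1] at c1 c2
  have e1 : xs 0 = 1 := rfl
  have e2 : ys 0 = 0 := rfl
  have e3 : xs 9 = 0 := rfl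
  have e4 : ys 9 = 1 := rfl
  simp only [e1, e2, e3, e4, mul_one, mul_zero, add_zero, zero_add] at a1 a2 b1 b2 c1 c2 d1 d2
  ext i j
  fin_cases i <;> fin_cases j
  · exact a1.symm.trans b1
  · exact c1.symm.trans d1
  · exact a2.symm.trans b2
  · exact c2.symm.trans d2

def mS : SL23 := ⟨!![0, 1; 2, 0], by decide⟩
def mB : SL23 := ⟨!![0, 1; 2, 1], by decide⟩
def mT : SL23 := ⟨!![1, 2; 0, 1], by decide⟩

lemma mB_eq : mB = mS * mT := by decide

lemma phi_S : phi mS = p2 := by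
  ext k : 1
  rw [phi_apply]
  revert k
  decide

lemma phi_B : phi mB = p3 := by
  ext k : 1
  rw [phi_apply]
  revert k
  decide

set_option maxRecDepth 100000 in
set_option maxHeartbeats 4000000 in
lemma words : ∀ a b c d : ZMod 3, a * d - b * c = 1 →
    ∃ (i : Fin 3) (j : Fin 4) (k : Fin 3),
      (mT ^ i.1 * mS ^ j.1 * mT ^ k.1).1 = !![a, b; c, d] := by decide +kernel

lemma gen (A : SL23) : A ∈ Subgroup.closure {mS, mB} := by
  have hS : mS ∈ Subgroup.closure {mS, mB} := Subgroup.subset_closure (by simp)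
  have hB : mB ∈ Subgroup.closure {mS, mB} := Subgroup.subset_closure (by simp)
  have hT : mT ∈ Subgroup.closure {mS, mB} := by
    have : mT = mS⁻¹ * mB := by rw [mB_eq]; group
    rw [this]
    exact mul_mem (inv_mem hS) hB
  have hd := A.2
  rw [Matrix.det_fin_two] at hd
  obtain ⟨i, j, k, h⟩ := words _ _ _ _ hd
  rw [← Matrix.eta_fin_two A.1] at h
  rw [← Subtype.ext h]
  exact mul_mem (mul_mem (pow_mem hT _) (pow_mem hS _)) (pow_mem hT _)

lemma phi_range : phi.range = Subgroup.closure {p2, p3} := by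
  have h : Subgroup.closure {mS, mB} = ⊤ := (Subgroup.eq_top_iff' _).2 gen
  rw [MonoidHom.range_eq_map, ← h, MonoidHom.map_closure, Set.image_pair, phi_S, phi_B]

/-- The subgroup generated by p₂ and p₃ is isomorphic to SL(2, ℤ/3ℤ). -/
theorem stmt13 :
    Nonempty ((Subgroup.closure {p2, p3}) ≃*
      Matrix.SpecialLinearGroup (Fin 2) (ZMod 3)) := by
  rw [← phi_range]
  exact ⟨(MonoidHom.ofInjective phi_inj).symm⟩
end

section
/- The natural action on {1,…,16} of the subgroup generated by the permutations p₂ and p₃ has exactly two orbits, namely {1, 3, 5, 6, 7, 12, 13, 15} and {2, 4, 8, 9, 10, 11, 14, 16}. (Consequently there are exactly two isomorphism classes of surfaces of type II.) -/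
/-- The indicator of the first orbit. -/
def inFirst : Fin 16 → Bool :=
  ![true, false, true, false, true, true, true, false, false, false, false, true, true, false,
    true, false]

/-- The chosen representative of the orbit of a point. -/
def orbRep (x : Fin 16) : Fin 16 := if inFirst x then 0 else 1

theorem inFirst_invariant (g : Equiv.Perm (Fin 16)) (hg : g ∈ Subgroup.closure {p2, p3}) :
    ∀ x, inFirst (g x) = inFirst x := by
  induction hg using Subgroup.closure_induction with
  | mem g h =>
    rcases h with rfl | rfl
    · decide
    · decide
  | one => intro x; rfl
  | mul a b _ _ ha hb => intro x; rw [Equiv.Perm.mul_apply, ha, hb]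
  | inv a _ ha =>
    intro x
    have h := ha (a⁻¹ x)
    rw [show a (a⁻¹ x) = x from a.apply_symm_apply x] at h
    exact h.symm

theorem reach_rep : ∀ x : Fin 16, ∃ a : Fin 4, ∃ b : Fin 6,
    p3^[b.val] (p2^[a.val] x) = orbRep x := by
  decide +kernel

theorem rep_mem_orbit (x : Fin 16) :
    orbRep x ∈ MulAction.orbit (Subgroup.closure {p2, p3}) x := by
  obtain ⟨a, b, h⟩ := reach_rep x
  have h2 : p2 ∈ Subgroup.closure {p2, p3} := Subgroup.subset_closure (by simp)
  have h3 : p3 ∈ Subgroup.closure {p2, p3} := Subgroup.subset_closure (by simp)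
  refine ⟨⟨p3 ^ b.val * p2 ^ a.val, mul_mem (pow_mem h3 _) (pow_mem h2 _)⟩, ?_⟩
  rw [← h]
  change (p3 ^ b.val * p2 ^ a.val) x = _
  rw [Equiv.Perm.mul_apply, ← Equiv.Perm.iterate_eq_pow, ← Equiv.Perm.iterate_eq_pow]

theorem mem_orbit_iff_inFirst (x y : Fin 16) :
    y ∈ MulAction.orbit (Subgroup.closure {p2, p3}) x ↔ inFirst y = inFirst x := by
  constructor
  · rintro ⟨g, rfl⟩
    exact inFirst_invariant g.1 g.2 x
  · intro h
    have hx := MulAction.orbit_eq_iff.mpr (rep_mem_orbit x)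
    have hy := MulAction.orbit_eq_iff.mpr (rep_mem_orbit y)
    have hr : orbRep y = orbRep x := by unfold orbRep; rw [h]
    rw [← hx, ← hr, hy]
    exact MulAction.mem_orbit_self y

theorem first_iff : ∀ y : Fin 16, inFirst y = true ↔
    y ∈ ({0, 2, 4, 5, 6, 11, 12, 14} : Set (Fin 16)) := by
  simp only [Set.mem_insert_iff, Set.mem_singleton_iff]
  decide

theorem second_iff : ∀ y : Fin 16, inFirst y = false ↔
    y ∈ ({1, 3, 7, 8, 9, 10, 13, 15} : Set (Fin 16)) := by
  simp only [Set.mem_insert_iff, Set.mem_singleton_iff]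
  decide

theorem orbit_first (x : Fin 16) (h : inFirst x = true) :
    MulAction.orbit (Subgroup.closure {p2, p3}) x = {0, 2, 4, 5, 6, 11, 12, 14} := by
  ext y
  rw [mem_orbit_iff_inFirst, h, first_iff]

theorem orbit_second (x : Fin 16) (h : inFirst x = false) :
    MulAction.orbit (Subgroup.closure {p2, p3}) x = {1, 3, 7, 8, 9, 10, 13, 15} := by
  ext y
  rw [mem_orbit_iff_inFirst, h, second_iff]

/-- The action of ⟨p₂, p₃⟩ on {1,…,16} has exactly two orbits, namely
{1,3,5,6,7,12,13,15} and {2,4,8,9,10,11,14,16} (written 0-indexed). -/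
theorem stmt14 :
    {s : Set (Fin 16) |
        ∃ x : Fin 16, s = MulAction.orbit (Subgroup.closure {p2, p3}) x}
      = {({0, 2, 4, 5, 6, 11, 12, 14} : Set (Fin 16)),
         ({1, 3, 7, 8, 9, 10, 13, 15} : Set (Fin 16))} ∧
    ({0, 2, 4, 5, 6, 11, 12, 14} : Set (Fin 16))
      ≠ ({1, 3, 7, 8, 9, 10, 13, 15} : Set (Fin 16)) := by
  refine ⟨?_, ?_⟩
  · ext s
    simp only [Set.mem_ofPred_eq]
    constructor
    · rintro ⟨x, rfl⟩
      cases h : inFirst x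
      · exact Or.inr (orbit_second x h)
      · exact Or.inl (orbit_first x h)
    · rintro (rfl | rfl)
      · exact ⟨0, (orbit_first 0 (by decide)).symm⟩
      · exact ⟨1, (orbit_second 1 (by decide)).symm⟩
  · intro h
    have h0 : (0 : Fin 16) ∈ ({1, 3, 7, 8, 9, 10, 13, 15} : Set (Fin 16)) := by
      rw [← h]
      exact (first_iff 0).mp (by decide)
    exact absurd ((second_iff 0).mpr h0) (by decide)
end

section
/- The natural action on {1,…,16} of the subgroup generated by the permutations p₂, p₃ and s is transitive, i.e. it has exactly one orbit. (Consequently the two non-isomorphic surfaces of type II are exchanged by an anti-holomorphic diffeomorphism, so they have conjugated complex structures.) -/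
/-- The permutation s = (1 14)(2 7)(3 16)(4 5)(6 8)(9 15)(10 12)(11 13) of {1,…,16},
written 0-indexed on `Fin 16`. -/
def sPerm : Equiv.Perm (Fin 16) :=
  ⟨![13, 6, 15, 4, 3, 7, 1, 5, 14, 11, 12, 9, 10, 0, 8, 2],
   ![13, 6, 15, 4, 3, 7, 1, 5, 14, 11, 12, 9, 10, 0, 8, 2],
   by decide, by decide⟩

/-- The action of ⟨p₂, p₃, s⟩ on {1,…,16} is transitive: it has exactly one orbit. -/
theorem stmt16 :
    ∀ x : Fin 16,
      MulAction.orbit (Subgroup.closure {p2, p3, sPerm}) x = Set.univ := by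
  have step : ∀ p ∈ ({p2, p3, sPerm} : Set (Equiv.Perm (Fin 16))), ∀ y : Fin 16,
      y ∈ MulAction.orbit (Subgroup.closure {p2, p3, sPerm}) (0 : Fin 16) →
      p y ∈ MulAction.orbit (Subgroup.closure {p2, p3, sPerm}) (0 : Fin 16) := by
    intro p hp y hy
    exact MulAction.mem_orbit_of_mem_orbit
      (⟨p, Subgroup.subset_closure hp⟩ : Subgroup.closure {p2, p3, sPerm}) hy
  have a := step p2 (by simp)
  have b := step p3 (by simp)
  have c := step sPerm (by simp)
  have h0 := MulAction.mem_orbit_self (M := Subgroup.closure {p2, p3, sPerm}) (0 : Fin 16)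
  have h12 := b 0 h0
  have h4 := b 12 h12
  have h6 := b 4 h4
  have h11 := b 6 h6
  have h5 := b 11 h11
  have h2 := a 5 h5
  have h14 := b 2 h2
  have h13 := c 0 h0
  have h15 := a 13 h13
  have h1 := a 15 h15
  have h8 := a 1 h1
  have h3 := b 1 h1
  have h10 := b 3 h3
  have h7 := b 13 h13
  have h9 := b 7 h7
  have all : ∀ y : Fin 16,
      y ∈ MulAction.orbit (Subgroup.closure {p2, p3, sPerm}) (0 : Fin 16) := by
    intro y
    fin_cases y
    exacts [h0, h1, h2, h3, h4, h5, h6, h7, h8, h9, h10, h11, h12, h13, h14, h15]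
  intro x
  rw [MulAction.orbit_eq_iff.mpr (all x)]
  exact Set.eq_univ_of_forall all
end
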